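/- Define the pattern families T1 = {(2,b), (b,2) : b ∈ B1}, T2 = {(5,b), (b,5) : b ∈ B2}, T3 = {(a,x,b) : a,b ∈ B1, x ∈ {2,3,6}}, and T4 = {(a,x,b) : a,b ∈ B2, x ∈ {1,4,5}}. Then for every word w over Fin 8, w contains an element of T1 ∪ T2 ∪ T3 ∪ T4 as a contiguous subword if and only if w contains an element of OT⁸ as a contiguous subword; that is, forbidding the minimal first-offender set OT⁸ forbids exactly the words containing some rotated-T isolation pattern family member. -/

import Mathlib

namespace OTLOCO

def B1 : Finset (Fin 8) := {0, 1, 4, 5}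
def B2 : Finset (Fin 8) := {2, 3, 6, 7}

/-- `w` contains the 2-tuple `(a, b)` (read left-to-right) as a contiguous subword. -/
def containsPair {m : ℕ} (w : Fin m → Fin 8) (a b : Fin 8) : Prop :=
  ∃ i j : Fin m, (j : ℕ) = (i : ℕ) + 1 ∧ w i = a ∧ w j = b

/-- `w` contains the 3-tuple `(a, x, b)` (read left-to-right) as a contiguous subword. -/
def containsTriple {m : ℕ} (w : Fin m → Fin 8) (a x b : Fin 8) : Prop :=
  ∃ i j k : Fin m, (j : ℕ) = (i : ℕ) + 1 ∧ (k : ℕ) = (i : ℕ) + 2 ∧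
    w i = a ∧ w j = x ∧ w k = b

/-!
Call `p` and `q` the letters that may not stand next to a letter of the blocks `C` and `B`. If
neither does, then a triple `(a, x, b)` with `a, b ∈ B` and `x ∈ C` has `x ≠ q`, since `x` is next
to `a ∈ B`, and `a, b ≠ p`, since both are next to `x ∈ C`. So once the pairs are forbidden, `p` and
`q` can be erased from the triples. The theorem is the case `B = B1`, `C = B2`, `p = 5`, `q = 2`.
-/

section Blocks

variable {α : Type*} {m : ℕ} {w : Fin m → α} {p q : α} {B C X Y : Set α}

/-- An occurrence of the letter `x` in `w` is immediately preceded or followed by a letter of `B`: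
the pattern families `T1` and `T2`. -/
def HasNeighborIn (w : Fin m → α) (x : α) (B : Set α) : Prop :=
  ∃ i j : Fin m, (j : ℕ) = (i : ℕ) + 1 ∧ (w i = x ∧ w j ∈ B ∨ w i ∈ B ∧ w j = x)

/-- An occurrence in `w` of a letter of `X` stands between two letters of `B`: the isolation
pattern families `T3` and `T4`. -/
def HasFlankedBy (w : Fin m → α) (X B : Set α) : Prop :=
  ∃ i j k : Fin m, (j : ℕ) = (i : ℕ) + 1 ∧ (k : ℕ) = (i : ℕ) + 2 ∧ w i ∈ B ∧ w j ∈ X ∧ w k ∈ B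

theorem HasNeighborIn.mono (hBC : B ⊆ C) : HasNeighborIn w p B → HasNeighborIn w p C := by
  rintro ⟨i, j, hij, h⟩
  exact ⟨i, j, hij, h.imp (And.imp_right (@hBC _)) (And.imp_left (@hBC _))⟩

theorem HasFlankedBy.mono (hXY : X ⊆ Y) (hBC : B ⊆ C) :
    HasFlankedBy w X B → HasFlankedBy w Y C := by
  rintro ⟨i, j, k, hij, hik, hi, hj, hk⟩
  exact ⟨i, j, k, hij, hik, hBC hi, hXY hj, hBC hk⟩

theorem HasFlankedBy.sdiff_singleton (hq : ¬HasNeighborIn w q B) (hp : ¬HasNeighborIn w p X) :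
    HasFlankedBy w X B → HasFlankedBy w (X \ {q}) (B \ {p}) := by
  rintro ⟨i, j, k, hij, hik, hi, hj, hk⟩
  have hjk : (k : ℕ) = (j : ℕ) + 1 := by omega
  have hi_ne : w i ≠ p := fun h => hp ⟨i, j, hij, .inl ⟨h, hj⟩⟩
  have hj_ne : w j ≠ q := fun h => hq ⟨i, j, hij, .inr ⟨hi, h⟩⟩
  have hk_ne : w k ≠ p := fun h => hp ⟨j, k, hjk, .inr ⟨hj, h⟩⟩
  exact ⟨i, j, k, hij, hik, ⟨hi, hi_ne⟩, ⟨hj, hj_ne⟩, ⟨hk, hk_ne⟩⟩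

theorem hasFlankedBy_iff_sdiff_singleton (hq : ¬HasNeighborIn w q B) (hp : ¬HasNeighborIn w p X) :
    HasFlankedBy w X B ↔ HasFlankedBy w (X \ {q}) (B \ {p}) :=
  ⟨.sdiff_singleton hq hp, .mono Set.sdiff_subset Set.sdiff_subset⟩

theorem rtis_families_iff_first_offenders_general (hX : X ⊆ C) (hY : Y ⊆ B) :
    (HasNeighborIn w q B ∨ HasNeighborIn w p C ∨ HasFlankedBy w X B ∨ HasFlankedBy w Y C) ↔
      (HasNeighborIn w q B ∨ HasNeighborIn w p C ∨
        HasFlankedBy w (X \ {q}) (B \ {p}) ∨ HasFlankedBy w (Y \ {p}) (C \ {q})) :=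
  or_congr_right' fun hq => or_congr_right' fun hp =>
    or_congr (hasFlankedBy_iff_sdiff_singleton hq (mt (.mono hX) hp))
      (hasFlankedBy_iff_sdiff_singleton hp (mt (.mono hY) hq))

end Blocks

section Levels

variable {m : ℕ} (w : Fin m → Fin 8) (x : Fin 8) (X B : Finset (Fin 8))

theorem hasNeighborIn_coe_iff :
    HasNeighborIn w x B ↔ ∃ b ∈ B, containsPair w x b ∨ containsPair w b x := by
  constructor
  · rintro ⟨i, j, hij, ⟨hi, hj⟩ | ⟨hi, hj⟩⟩
    · exact ⟨w j, hj, .inl ⟨i, j, hij, hi, rfl⟩⟩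
    · exact ⟨w i, hi, .inr ⟨i, j, hij, rfl, hj⟩⟩
  · rintro ⟨_, hb, ⟨i, j, hij, hi, rfl⟩ | ⟨i, j, hij, rfl, hj⟩⟩
    · exact ⟨i, j, hij, .inl ⟨hi, hb⟩⟩
    · exact ⟨i, j, hij, .inr ⟨hb, hj⟩⟩

theorem hasFlankedBy_coe_iff :
    HasFlankedBy w X B ↔ ∃ a ∈ B, ∃ b ∈ B, ∃ x ∈ X, containsTriple w a x b := by
  constructor
  · rintro ⟨i, j, k, hij, hik, hi, hj, hk⟩
    exact ⟨w i, hi, w k, hk, w j, hj, i, j, k, hij, hik, rfl, rfl, rfl⟩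
  · rintro ⟨_, ha, _, hb, _, hx, i, j, k, hij, hik, rfl, rfl, rfl⟩
    exact ⟨i, j, k, hij, hik, ha, hx, hb⟩

end Levels

/-- Containing a pattern of `T1 ∪ T2 ∪ T3 ∪ T4` is equivalent to containing a pattern of
the minimal first-offender set `OT⁸`. -/
theorem rtis_families_iff_first_offenders (m : ℕ) (w : Fin m → Fin 8) :
    ((∃ b ∈ B1, containsPair w 2 b ∨ containsPair w b 2) ∨
     (∃ b ∈ B2, containsPair w 5 b ∨ containsPair w b 5) ∨
     (∃ a ∈ B1, ∃ b ∈ B1, ∃ x ∈ ({2, 3, 6} : Finset (Fin 8)),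
        containsTriple w a x b) ∨
     (∃ a ∈ B2, ∃ b ∈ B2, ∃ x ∈ ({1, 4, 5} : Finset (Fin 8)),
        containsTriple w a x b)) ↔
    ((∃ b ∈ B1, containsPair w 2 b ∨ containsPair w b 2) ∨
     (∃ b ∈ B2, containsPair w 5 b ∨ containsPair w b 5) ∨
     (∃ a ∈ ({0, 1, 4} : Finset (Fin 8)), ∃ b ∈ ({0, 1, 4} : Finset (Fin 8)),
        ∃ x ∈ ({3, 6} : Finset (Fin 8)), containsTriple w a x b) ∨
     (∃ a ∈ ({3, 6, 7} : Finset (Fin 8)), ∃ b ∈ ({3, 6, 7} : Finset (Fin 8)),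
        ∃ x ∈ ({1, 4} : Finset (Fin 8)), containsTriple w a x b)) := by
  have hB1 : B1.erase 5 = {0, 1, 4} := by decide
  have hB2 : B2.erase 2 = {3, 6, 7} := by decide
  have hX : ({2, 3, 6} : Finset (Fin 8)).erase 2 = {3, 6} := by decide
  have hY : ({1, 4, 5} : Finset (Fin 8)).erase 5 = {1, 4} := by decide
  have hXC : ({2, 3, 6} : Finset (Fin 8)) ⊆ B2 := by decide
  have hYB : ({1, 4, 5} : Finset (Fin 8)) ⊆ B1 := by decide
  simpa only [← Finset.coe_erase, hB1, hB2, hX, hY, hasNeighborIn_coe_iff, hasFlankedBy_coe_iff]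
    using rtis_families_iff_first_offenders_general (w := w) (p := 5) (q := 2)
      (Finset.coe_subset.2 hXC) (Finset.coe_subset.2 hYB)

end OTLOCO
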